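/- Let m ≥ 1, let ρ_0, …, ρ_{m−1} be qubit states with m×3 Bloch matrix S, and let u ∈ ℝ^m be the all-ones vector. For every two-outcome POVM (π_0, π_1) on ℂ², the correlation vector p ∈ ℝ^m defined by p_x = Tr[ρ_x π_0] lies in the convex hull of the set {0, u} ∪ { ½u + S v : v ∈ ℝ³, ‖v‖₂ ≤ 1 }. (Forward direction of Proposition 2: S₂(ρ_x) ⊆ conv{0, u, hyper-ellipsoid}.) -/

import Mathlib

open Matrix Finset
open scoped ComplexOrder

/-- The Pauli matrices σ₁, σ₂, σ₃. -/
noncomputable def pauli : Fin 3 → Matrix (Fin 2) (Fin 2) ℂ :=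
  ![!![0, 1; 1, 0], !![0, -Complex.I; Complex.I, 0], !![1, 0; 0, -1]]

/-!
In the Pauli basis a Hermitian matrix `A` has coordinates `(a, w)`, where `a` is half its trace and
`w` its Bloch vector, and `‖w‖ ≤ a` when `A` is positive semidefinite. Applied to `π₀` and to
`π₁ = 1 - π₀`, this places the coordinates of `π₀` in the double cone `‖w‖ ≤ min a (1 - a)`, the
convex hull of its apexes `(0, 0)`, `(1, 0)` and of the ball of radius `1 / 2` at height `1 / 2`.
The correlation vector is the linear image `a • u + 2 • S w` of these coordinates; the apexes go to
`0` and `u`, and the ball goes to the ellipsoid.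
-/

section DoubleCone

/-- The two apexes and the middle ball of the double cone `‖w‖ ≤ min a (1 - a)` of points `(a, w)`,
which is the shape of the set of POVM elements in Pauli coordinates. -/
def doubleConeGenerators (E : Type*) [NormedAddCommGroup E] : Set (ℝ × E) :=
  {0, (1, 0)} ∪ {1 / 2} ×ˢ Metric.closedBall 0 (1 / 2)

variable {E : Type*} [NormedAddCommGroup E] [NormedSpace ℝ E]

lemma mem_convexHull_doubleConeGenerators {a : ℝ} {w : E} (h₀ : ‖w‖ ≤ a) (h₁ : ‖w‖ ≤ 1 - a) :
    (a, w) ∈ convexHull ℝ (doubleConeGenerators E) := by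
  let v : E := (1 / 2 : ℝ) • NormedSpace.normalize w
  have hv : ‖v‖ ≤ 1 / 2 := by
    rcases eq_or_ne w 0 with rfl | hw_ne
    · simp [v]
    · simp [v, norm_smul, NormedSpace.norm_normalize hw_ne]
  have hw : (2 * ‖w‖) • v = w := by
    rw [smul_smul, mul_one_div, mul_div_cancel_left₀ _ two_ne_zero,
      NormedSpace.norm_smul_normalize]
  let c : Fin 3 → ℝ := ![1 - a - ‖w‖, a - ‖w‖, 2 * ‖w‖]
  let z : Fin 3 → ℝ × E := ![0, (1, 0), (1 / 2, v)]
  have hc_nonneg : ∀ i ∈ univ, 0 ≤ c i := by simp [c, Fin.forall_fin_succ, h₀, h₁]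
  have hc_sum : ∑ i, c i = 1 := by
    simp only [c, Fin.sum_univ_three, cons_val_zero, cons_val_one, Matrix.cons_val]
    ring
  have hz : ∀ i ∈ univ, z i ∈ convexHull ℝ (doubleConeGenerators E) := fun i _ =>
    subset_convexHull ℝ _ <| by
      fin_cases i
      · exact Or.inl (Or.inl rfl)
      · exact Or.inl (Or.inr rfl)
      · exact Or.inr ⟨rfl, mem_closedBall_zero_iff.2 hv⟩
  have hcomb : ∑ i, c i • z i = (a, w) := by
    simp only [c, z, Fin.sum_univ_three, cons_val_zero, cons_val_one, Matrix.cons_val, smul_zero,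
      Prod.smul_mk, hw, zero_add, Prod.mk_add_mk, smul_eq_mul, Prod.mk.injEq, and_true]
    ring
  exact hcomb ▸ (convex_convexHull ℝ _).sum_mem hc_nonneg hc_sum hz

end DoubleCone

section BlochVector

/-- The Bloch vector `(½ Re Tr[A σₖ])ₖ` of a 2×2 complex matrix, used both for the rows of the Bloch
matrix and for the coordinates of a POVM element. Taking the real part extends it to all matrices;
for Hermitian `A` the traces are real already. -/
noncomputable def blochVector (A : Matrix (Fin 2) (Fin 2) ℂ) : EuclideanSpace ℝ (Fin 3) :=
  WithLp.toLp 2 fun k => (A * pauli k).trace.re / 2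

lemma trace_pauli (k : Fin 3) : (pauli k).trace = 0 := by
  fin_cases k <;> simp [pauli, trace_fin_two]

lemma blochVector_one_sub (A : Matrix (Fin 2) (Fin 2) ℂ) :
    blochVector (1 - A) = -blochVector A := by
  ext k
  simp [blochVector, sub_mul, trace_pauli, neg_div]

variable {A : Matrix (Fin 2) (Fin 2) ℂ}

lemma blochVector_of_isHermitian (hA : A.IsHermitian) :
    blochVector A = !₂[(A 0 1).re, -(A 0 1).im, ((A 0 0).re - (A 1 1).re) / 2] := by
  have h10 : A 1 0 = star (A 0 1) := (hA.apply 1 0).symm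
  ext k
  fin_cases k <;> simp [blochVector, pauli, trace_fin_two, mul_apply, h10, sub_eq_add_neg]

lemma re_det_of_isHermitian (hA : A.IsHermitian) :
    A.det.re = (A.trace.re / 2) ^ 2 - ‖blochVector A‖ ^ 2 := by
  have h10 : A 1 0 = star (A 0 1) := (hA.apply 1 0).symm
  have h00 : (A 0 0).im = 0 := Complex.conj_eq_iff_im.1 (hA.apply 0 0)
  rw [blochVector_of_isHermitian hA, EuclideanSpace.real_norm_sq_eq, det_fin_two, trace_fin_two,
    h10]
  simp only [Fin.sum_univ_three, cons_val_zero, cons_val_one, Matrix.cons_val, RCLike.star_def,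
    Complex.sub_re, Complex.add_re, Complex.mul_re, Complex.conj_re, Complex.conj_im, h00]
  ring

lemma eq_pauli_expansion_of_isHermitian (hA : A.IsHermitian) :
    A = (A.trace.re / 2) • 1 + ∑ k, blochVector A k • pauli k := by
  have h10 : A 1 0 = star (A 0 1) := (hA.apply 1 0).symm
  have h00 : (A 0 0).im = 0 := Complex.conj_eq_iff_im.1 (hA.apply 0 0)
  have h11 : (A 1 1).im = 0 := Complex.conj_eq_iff_im.1 (hA.apply 1 1)
  have hcancel (a b : ℝ) : a / 2 + b / 2 + (b / 2 - a / 2) = b := by ring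
  rw [blochVector_of_isHermitian hA]
  ext i j
  fin_cases i <;> fin_cases j <;> apply Complex.ext <;>
    simp [pauli, trace_fin_two, Fin.sum_univ_three, h10, h00, h11, add_div, sub_div, hcancel]

lemma re_trace_mul_of_isHermitian (B : Matrix (Fin 2) (Fin 2) ℂ) (hA : A.IsHermitian) :
    (B * A).trace.re = A.trace.re / 2 * B.trace.re + 2 * (blochVector B ⬝ᵥ blochVector A) := calc
  (B * A).trace.re
    = (B * ((A.trace.re / 2) • 1 + ∑ k, blochVector A k • pauli k)).trace.re := by
      rw [← eq_pauli_expansion_of_isHermitian hA]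
  _ = A.trace.re / 2 * B.trace.re + ∑ k, blochVector A k * (B * pauli k).trace.re := by
      simp [mul_add, mul_sum, trace_sum]
  _ = A.trace.re / 2 * B.trace.re + 2 * (blochVector B ⬝ᵥ blochVector A) := by
      simp only [dotProduct, mul_sum, blochVector]
      congr! 2
      ring

lemma norm_blochVector_le_of_posSemidef (hA : A.PosSemidef) :
    ‖blochVector A‖ ≤ A.trace.re / 2 := by
  have htrace : 0 ≤ A.trace.re := (Complex.le_def.1 hA.trace_nonneg).1
  have hdet : 0 ≤ A.det.re := (Complex.le_def.1 hA.det_nonneg).1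
  rw [re_det_of_isHermitian hA.isHermitian, sub_nonneg] at hdet
  exact le_of_sq_le_sq hdet (by positivity)

lemma half_trace_blochVector_mem_convexHull {B : Matrix (Fin 2) (Fin 2) ℂ} (hA : A.PosSemidef)
    (hB : B.PosSemidef) (hAB : A + B = 1) :
    (A.trace.re / 2, blochVector A) ∈
      convexHull ℝ (doubleConeGenerators (EuclideanSpace ℝ (Fin 3))) := by
  obtain rfl : B = 1 - A := eq_sub_of_add_eq' hAB
  have hB' : ‖blochVector A‖ ≤ 1 - A.trace.re / 2 := calc
    ‖blochVector A‖ = ‖blochVector (1 - A)‖ := by rw [blochVector_one_sub, norm_neg]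
    _ ≤ (1 - A).trace.re / 2 := norm_blochVector_le_of_posSemidef hB
    _ = 1 - A.trace.re / 2 := by simp [sub_div]
  exact mem_convexHull_doubleConeGenerators (norm_blochVector_le_of_posSemidef hA) hB'

end BlochVector

section Correlation

variable {ι n : Type*} [Fintype n]

/-- The linear map `(a, w) ↦ a u + 2 S w`, which takes the Pauli coordinates of a measurement
operator (half its trace and its Bloch vector) to its correlation vector. -/
noncomputable def correlationMap (u : ι → ℝ) (S : Matrix ι n ℝ) :
    ℝ × EuclideanSpace ℝ n →ₗ[ℝ] ι → ℝ :=
  (LinearMap.toSpanSingleton ℝ (ι → ℝ) u).coprod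
    ((2 : ℝ) • S.mulVecLin ∘ₗ (WithLp.linearEquiv 2 ℝ (n → ℝ)).toLinearMap)

lemma correlationMap_apply (u : ι → ℝ) (S : Matrix ι n ℝ) (a : ℝ) (w : EuclideanSpace ℝ n) :
    correlationMap u S (a, w) = a • u + (2 : ℝ) • S *ᵥ w := by
  simp [correlationMap]

lemma correlationMap_image_subset (u : ι → ℝ) (S : Matrix ι n ℝ) :
    correlationMap u S '' doubleConeGenerators (EuclideanSpace ℝ n) ⊆
      {0, u} ∪ {q | ∃ v : n → ℝ, √(∑ j, v j ^ 2) ≤ 1 ∧ q = (1 / 2 : ℝ) • u + S *ᵥ v} := by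
  rintro _ ⟨x, (rfl | rfl) | ⟨h, hw⟩, rfl⟩
  · simp
  · simp [correlationMap_apply]
  · obtain ⟨a, w⟩ := x
    obtain rfl : a = 1 / 2 := h
    have hv : ‖(2 : ℝ) • w‖ ≤ 1 := by
      rw [norm_smul, Real.norm_two]
      linarith [mem_closedBall_zero_iff.1 hw]
    refine Or.inr ⟨(2 : ℝ) • w, ?_, ?_⟩
    · simpa only [EuclideanSpace.norm_eq, Real.norm_eq_abs, sq_abs, WithLp.ofLp_smul] using hv
    · rw [correlationMap_apply, mulVec_smul]

end Correlation

theorem stmt7_general {ι : Type*} (ρ : ι → Matrix (Fin 2) (Fin 2) ℂ)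
    (S : Matrix ι (Fin 3) ℝ)
    (hS : ∀ x k, S x k = ((ρ x * pauli k).trace).re / 2)
    (u : ι → ℝ) (hu : ∀ x, u x = (ρ x).trace.re)
    (π₀ π₁ : Matrix (Fin 2) (Fin 2) ℂ)
    (hπ₀ : π₀.PosSemidef) (hπ₁ : π₁.PosSemidef) (hπ : π₀ + π₁ = 1)
    (p : ι → ℝ) (hp : ∀ x, p x = ((ρ x * π₀).trace).re) :
    p ∈ convexHull ℝ
      ({0, u} ∪ {q : ι → ℝ | ∃ v : Fin 3 → ℝ,
        Real.sqrt (∑ j, v j ^ 2) ≤ 1 ∧ q = (1 / 2 : ℝ) • u + S *ᵥ v}) := by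
  have hrow (x : ι) : S x = blochVector (ρ x) := funext (hS x)
  have hp_map : p = correlationMap u S (π₀.trace.re / 2, blochVector π₀) := by
    ext x
    rw [hp, re_trace_mul_of_isHermitian _ hπ₀.isHermitian, correlationMap_apply, ← hrow, ← hu]
    rfl
  refine convexHull_mono (correlationMap_image_subset u S) ?_
  rw [hp_map, ← LinearMap.image_convexHull]
  exact Set.mem_image_of_mem _ (half_trace_blochVector_mem_convexHull hπ₀ hπ₁ hπ)

/-- forward direction of Proposition 2: any correlation vector
p_x = Tr[ρ_x π₀] generated by a two-outcome POVM lies in the convex hull of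
{0, u} together with the hyper-ellipsoid ½u + S·(unit ball). -/
theorem stmt7 (m : ℕ) (hm : 1 ≤ m)
    (ρ : Fin m → Matrix (Fin 2) (Fin 2) ℂ)
    (hρ : ∀ x, (ρ x).PosSemidef ∧ (ρ x).trace = 1)
    (S : Matrix (Fin m) (Fin 3) ℝ)
    (hS : ∀ x k, S x k = ((ρ x * pauli k).trace).re / 2)
    (u : Fin m → ℝ) (hu : u = fun _ => 1)
    (π₀ π₁ : Matrix (Fin 2) (Fin 2) ℂ)
    (hπ₀ : π₀.PosSemidef) (hπ₁ : π₁.PosSemidef) (hπ : π₀ + π₁ = 1)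
    (p : Fin m → ℝ) (hp : ∀ x, p x = ((ρ x * π₀).trace).re) :
    p ∈ convexHull ℝ
      ({0, u} ∪ {q : Fin m → ℝ | ∃ v : Fin 3 → ℝ,
        Real.sqrt (∑ j, v j ^ 2) ≤ 1 ∧ q = (1 / 2 : ℝ) • u + S *ᵥ v}) :=
  stmt7_general ρ S hS u (fun x => by simp [hu, (hρ x).2]) π₀ π₁ hπ₀ hπ₁ hπ p hp
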